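/- Let ε ∈ (0,1) be irrational with continued fraction expansion ε = [0; a_1, a_2, …], and let q_N denote the denominators of the convergents of ε, i.e. q_{−1} = 0, q_0 = 1, q_N = a_N q_{N−1} + q_{N−2} for N ≥ 1. Then for every x0 ∈ [0,1), the index of the Sturmian word u_{ε,x0} of slope ε satisfies ind(u_{ε,x0}) = sup{ 2 + a_{N+1} + (q_{N−1} − 2)/q_N : N ≥ 0 } (as elements of ℝ ∪ {+∞}). -/

import Mathlib

/-!
The word `u2 ε x0` codes the orbit `x0 - n ε` modulo `1`. A fractional power `w^r` with
`|w| = p` and total length `p + L` is a run of `L` consecutive matches `u_j = u_{j+p}`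
(`period_of_isFactor`, `isFactor_of_period`), so the index is the supremum of `(p + L) / p`.

If `f` is the fractional part of `p ε` and `η = min f (1 - f)` is small, then `u_j ≠ u_{j+p}`
exactly when the orbit at time `j` or at time `j + 1` lies in an arc `J` of length `η` adjacent to
`0`. Hence a run of `L` matches is a stretch of `L + 1` times off `J`, and the longest one is the
longest return time to `J` minus `2`. For `p = q_N`, where `η = η_N = |q_N ε - p_N|`, the longest
return time is `q_N + q_{N+1}`: the lemma `hit` bounds it from above, and `exists_run` exhibits a
return that long, using the best approximation property `best_approx`. This yields the exponent
`(2 q_N + q_{N+1} - 2) / q_N`, which is the term of index `N` in the claim (`idxTerm_eq`).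

For a general `p`, choose `N` with `q_N ≤ p < q_{N+1}`. Then `η ≥ η_N`, so `J` contains an arc of
length `η_N` and the same bound on `L` holds with a larger denominator (`exponent_le`).
-/


/-- The alphabet of 3iet words. -/
inductive L3 | A | B | C
deriving DecidableEq, Inhabited

/-- The three-interval exchange transformation `T_{ε,ℓ}`. -/
noncomputable def T3 (ε ℓ : ℝ) (x : ℝ) : ℝ :=
  if x < ℓ - 1 + ε then x + 1 - ε
  else if x < ε then x + 1 - 2*ε
  else x - ε

/-- The 3iet word `u_{ε,ℓ,x0}` coding the orbit of `x0` under `T_{ε,ℓ}`. -/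
noncomputable def u3 (ε ℓ x0 : ℝ) (n : ℕ) : L3 :=
  if (T3 ε ℓ)^[n] x0 < ℓ - 1 + ε then L3.A
  else if (T3 ε ℓ)^[n] x0 < ε then L3.B
  else L3.C

/-- The two-interval exchange transformation `T_ε`. -/
noncomputable def T2 (ε : ℝ) (x : ℝ) : ℝ := if x < ε then x + 1 - ε else x - ε

/-- The Sturmian word `u_{ε,x0}` of slope `ε` coding the orbit of `x0` under `T_ε`
(letter `0` is `false`, letter `1` is `true`). -/
noncomputable def u2 (ε x0 : ℝ) (n : ℕ) : Bool := if (T2 ε)^[n] x0 < ε then false else true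

/-- `w` is a factor of the infinite word `u`. -/
def IsFactor {α : Type*} (w : List α) (u : ℕ → α) : Prop :=
  ∃ i : ℕ, w = (List.range w.length).map fun j => u (i + j)

/-- The prefix of length `m` of the periodic infinite word `www⋯`;
for `|w| ≤ m` this is the fractional power `w^{m/|w|}`. -/
def powPrefix {α : Type*} [Inhabited α] (w : List α) (m : ℕ) : List α :=
  (List.range m).map fun j => w.getD (j % w.length) default

/-- The index of the factor `w` in the infinite word `u`:
`sup {r ∈ ℚ, r ≥ 1, r|w| ∈ ℕ | w^r is a factor of u}`, as an element of `ℝ ∪ {+∞}`. -/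
noncomputable def factorIndex {α : Type*} [Inhabited α] (u : ℕ → α) (w : List α) : EReal :=
  sSup {x : EReal | ∃ m : ℕ, w.length ≤ m ∧ IsFactor (powPrefix w m) u ∧
    x = (((m : ℝ) / (w.length : ℝ) : ℝ) : EReal)}

/-- The index of the infinite word `u`: `sup {ind(w) | w a nonempty factor of u}`. -/
noncomputable def wordIndex {α : Type*} [Inhabited α] (u : ℕ → α) : EReal :=
  sSup {x : EReal | ∃ w : List α, w ≠ [] ∧ IsFactor w u ∧ x = factorIndex u w}

/-- The Gauss map `x ↦ {1/x}`. -/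
noncomputable def gaussMap (x : ℝ) : ℝ := Int.fract x⁻¹

/-- `cfa ε n` is the partial quotient `a_{n+1}` of the continued fraction
expansion `ε = [0; a₁, a₂, a₃, …]` of the irrational `ε ∈ (0,1)`. -/
noncomputable def cfa (ε : ℝ) (n : ℕ) : ℕ := ⌊(gaussMap^[n] ε)⁻¹⌋₊

/-- The morphism `σ01 : A ↦ 0, B ↦ 01, C ↦ 1`. -/
def sigma01 : L3 → List Bool
  | L3.A => [false]
  | L3.B => [false, true]
  | L3.C => [true]

/-- The morphism `σ10 : A ↦ 0, B ↦ 10, C ↦ 1`. -/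
def sigma10 : L3 → List Bool
  | L3.A => [false]
  | L3.B => [true, false]
  | L3.C => [true]

/-- The image `φ(u₀)φ(u₁)φ(u₂)⋯` of an infinite word `u` under a (nonerasing) morphism `φ`. -/
def morphWord (φ : L3 → List Bool) (u : ℕ → L3) (m : ℕ) : Bool :=
  ((List.range (m+1)).flatMap fun k => φ (u k)).getD m false

/-- `u` is a uniformly recurrent infinite word: every factor occurs infinitely often
with bounded gaps (every window of some length `R` contains an occurrence). -/
def UniformlyRecurrent {α : Type*} (u : ℕ → α) : Prop :=
  ∀ w : List α, IsFactor w u → ∃ R : ℕ, ∀ i : ℕ, ∃ j : ℕ, i ≤ j ∧ j < i + R ∧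
    w = (List.range w.length).map fun t => u (j + t)

/-- `u` is eventually periodic. -/
def EventuallyPeriodic {α : Type*} (u : ℕ → α) : Prop :=
  ∃ N p : ℕ, 0 < p ∧ ∀ n : ℕ, N ≤ n → u (n + p) = u n

/-- The standard words of `ε = [0; a₁, a₂, …]`, with the index shifted by one:
`sw ε 0 = s₋₁ = 1`, `sw ε 1 = s₀ = 0`, `sw ε 2 = s₁ = s₀^{a₁-1} s₋₁`, and
`sw ε (n+3) = s_{n+2} = s_{n+1}^{a_{n+2}} s_n`. -/
noncomputable def sw (ε : ℝ) : ℕ → List Bool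
  | 0 => [true]
  | 1 => [false]
  | 2 => (List.replicate (cfa ε 0 - 1) ([false] : List Bool)).flatten ++ [true]
  | (n+3) => (List.replicate (cfa ε (n+1)) (sw ε (n+2))).flatten ++ sw ε (n+1)

/-- Denominators of the convergents of `ε`, shifted by one: `qq ε 0 = q₋₁ = 0`,
`qq ε 1 = q₀ = 1`, and `qq ε (n+2) = q_{n+1} = a_{n+1} q_n + q_{n-1}`. -/
noncomputable def qq (ε : ℝ) : ℕ → ℕ
  | 0 => 0
  | 1 => 1
  | (n+2) => cfa ε n * qq ε (n+1) + qq ε n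

/-- `u` is a 3iet word. -/
def Is3ietWord (u : ℕ → L3) : Prop :=
  ∃ ε ℓ x0 : ℝ, Irrational ε ∧ 0 < ε ∧ ε < 1 ∧ max ε (1 - ε) < ℓ ∧ ℓ < 1 ∧
    x0 ∈ Set.Ico 0 ℓ ∧ u = u3 ε ℓ x0

/-- `v` is a Sturmian word. -/
def IsSturmianWord (v : ℕ → Bool) : Prop :=
  ∃ ε x0 : ℝ, Irrational ε ∧ 0 < ε ∧ ε < 1 ∧ x0 ∈ Set.Ico (0:ℝ) 1 ∧ v = u2 ε x0

/-- The infinite binary word `v1` is amicable with `v2` (`v1 ∝ v2`). -/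
def AmicableInf (v1 v2 : ℕ → Bool) : Prop :=
  ∃ w : ℕ → L3, v1 = morphWord sigma01 w ∧ v2 = morphWord sigma10 w

/-- The morphism `Φ_k : A ↦ 0, B ↦ 01^{k+1}, C ↦ 01^k`. -/
def Phi (k : ℕ) : L3 → List Bool
  | L3.A => [false]
  | L3.B => false :: List.replicate (k+1) true
  | L3.C => false :: List.replicate k true

/-- The infinite word `B₀B₁B₂⋯` obtained by concatenating the sequence of
(nonempty) blocks `B`. -/
def concatOfBlocks (B : ℕ → List Bool) (m : ℕ) : Bool :=
  ((List.range (m+1)).flatMap B).getD m false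

/-! ### Continued fractions -/

/-- `cfe ε n` is the distance `η_{n-1} = |q_{n-1} ε - p_{n-1}|` (so `η_{-1} = 1`, `η_0 = ε`),
defined as a product of iterates of the Gauss map; the shift agrees with that of `qq`. -/
noncomputable def cfe (ε : ℝ) : ℕ → ℝ
  | 0 => 1
  | (n+1) => cfe ε n * gaussMap^[n] ε

/-- Numerators of the convergents of `ε`, shifted by one as in `qq`: `pp ε 0 = p₋₁ = 1`,
`pp ε 1 = p₀ = 0`. -/
noncomputable def pp (ε : ℝ) : ℕ → ℕ
  | 0 => 1
  | 1 => 0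
  | (n+2) => cfa ε n * pp ε (n+1) + pp ε n

section ContinuedFraction

variable {ε : ℝ}

lemma gauss_iter (hirr : Irrational ε) (h0 : 0 < ε) (h1 : ε < 1) (n : ℕ) :
    Irrational (gaussMap^[n] ε) ∧ 0 < gaussMap^[n] ε ∧ gaussMap^[n] ε < 1 := by
  induction n with
  | zero => exact ⟨hirr, h0, h1⟩
  | succ n ih =>
    rw [Function.iterate_succ_apply']
    have hi : Irrational (gaussMap (gaussMap^[n] ε)) := by
      unfold gaussMap Int.fract
      exact (irrational_inv_iff.mpr ih.1).sub_intCast _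
    refine ⟨hi, lt_of_le_of_ne (Int.fract_nonneg _) (hi.ne_zero).symm, Int.fract_lt_one _⟩

lemma gauss_succ (hirr : Irrational ε) (h0 : 0 < ε) (h1 : ε < 1) (n : ℕ) :
    gaussMap^[n+1] ε = (gaussMap^[n] ε)⁻¹ - cfa ε n := by
  have h := (gauss_iter hirr h0 h1 n).2.1
  have h2 : 0 ≤ (gaussMap^[n] ε)⁻¹ := by positivity
  rw [Function.iterate_succ_apply']
  unfold cfa
  rw [natCast_floor_eq_intCast_floor h2]
  rfl

lemma cfa_pos (hirr : Irrational ε) (h0 : 0 < ε) (h1 : ε < 1) (n : ℕ) : 1 ≤ cfa ε n := by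
  have h := gauss_iter hirr h0 h1 n
  unfold cfa
  rw [Nat.one_le_floor_iff]
  exact (one_le_inv₀ h.2.1).mpr h.2.2.le

lemma cfe_pos (hirr : Irrational ε) (h0 : 0 < ε) (h1 : ε < 1) (n : ℕ) : 0 < cfe ε n := by
  induction n with
  | zero => simp [cfe]
  | succ n ih => exact mul_pos ih (gauss_iter hirr h0 h1 n).2.1

lemma cfe_succ_lt (hirr : Irrational ε) (h0 : 0 < ε) (h1 : ε < 1) (n : ℕ) :
    cfe ε (n+1) < cfe ε n := by
  have := cfe_pos hirr h0 h1 n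
  have := (gauss_iter hirr h0 h1 n).2.2
  simp only [cfe]
  nlinarith

lemma cfe_rec (hirr : Irrational ε) (h0 : 0 < ε) (h1 : ε < 1) (n : ℕ) :
    cfe ε (n+2) = cfe ε n - cfa ε n * cfe ε (n+1) := by
  have h := (gauss_iter hirr h0 h1 n).2.1
  have : cfe ε (n+2) = cfe ε n * gaussMap^[n] ε * gaussMap^[n+1] ε := rfl
  rw [this, gauss_succ hirr h0 h1]
  simp only [cfe]
  field_simp

lemma cfe_one : cfe ε 1 = ε := by simp [cfe]

lemma cfe_anti (hirr : Irrational ε) (h0 : 0 < ε) (h1 : ε < 1) : Antitone (cfe ε) :=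
  antitone_nat_of_succ_le fun n => (cfe_succ_lt hirr h0 h1 n).le

/-- `q_n ε - p_n = (-1)^n η_n`, with indices shifted by one. -/
lemma qq_mul_sub (hirr : Irrational ε) (h0 : 0 < ε) (h1 : ε < 1) (n : ℕ) :
    (qq ε n * ε - pp ε n = (-1)^(n+1) * cfe ε n) ∧
      (qq ε (n+1) * ε - pp ε (n+1) = (-1)^n * cfe ε (n+1)) := by
  induction n with
  | zero => simp [qq, pp, cfe]
  | succ n ih =>
    obtain ⟨ha, hb⟩ := ih
    refine ⟨by rw [hb]; ring, ?_⟩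
    rw [cfe_rec hirr h0 h1]
    simp only [qq, pp]
    push_cast
    linear_combination ha + cfa ε n * hb

lemma qq_det (n : ℕ) :
    (qq ε (n+1) : ℤ) * pp ε n - qq ε n * pp ε (n+1) = (-1)^n := by
  induction n with
  | zero => simp [qq, pp]
  | succ n ih =>
    simp only [qq, pp]
    push_cast
    linear_combination (-1) * ih

lemma qq_pos (hirr : Irrational ε) (h0 : 0 < ε) (h1 : ε < 1) (n : ℕ) : 1 ≤ qq ε (n+1) := by
  induction n with
  | zero => simp [qq]
  | succ n ih =>
    simp only [qq]
    nlinarith [cfa_pos hirr h0 h1 n]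

lemma qq_add_le (hirr : Irrational ε) (h0 : 0 < ε) (h1 : ε < 1) (n : ℕ) :
    qq ε (n+1) + qq ε n ≤ qq ε (n+2) := by
  simp only [qq]
  nlinarith [cfa_pos hirr h0 h1 n]

lemma qq_ge (hirr : Irrational ε) (h0 : 0 < ε) (h1 : ε < 1) (n : ℕ) : n ≤ qq ε (n+1) := by
  induction n with
  | zero => simp
  | succ n ih =>
    have := qq_add_le hirr h0 h1 n
    rcases n with _ | n
    · exact qq_pos hirr h0 h1 1
    · have := qq_pos hirr h0 h1 n
      simp only [add_assoc, Nat.reduceAdd] at *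
      omega

lemma exists_qq_between (hirr : Irrational ε) (h0 : 0 < ε) (h1 : ε < 1) (p : ℕ) (hp : 1 ≤ p) :
    ∃ N, qq ε (N+1) ≤ p ∧ p < qq ε (N+2) := by
  classical
  have hex : ∃ n, p < qq ε (n+2) := ⟨p, qq_ge hirr h0 h1 (p+1)⟩
  refine ⟨Nat.find hex, ?_, Nat.find_spec hex⟩
  rcases h : Nat.find hex with _ | n
  · simpa [qq] using hp
  · exact not_lt.mp (Nat.find_min hex (by omega : n < Nat.find hex))

/-- Best approximation property: among `1 ≤ n < q_N + q_{N+1}`, only `n = q_{N+1}` has `n ε`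
at distance less than `η_N` from an integer. The pair `(n, k)` is an integer combination
`x (q_N, p_N) + y (q_{N+1}, p_{N+1})` and the two errors have opposite signs, so closeness
forces `x = 0`. -/
lemma best_approx (hirr : Irrational ε) (h0 : 0 < ε) (h1 : ε < 1) (N : ℕ) (n k : ℤ)
    (hn : 1 ≤ n) (hn' : n < qq ε (N+1) + qq ε (N+2)) (h : |n * ε - k| < cfe ε (N+1)) :
    n = qq ε (N+2) ∧ k = pp ε (N+2) := by
  have hdet := qq_det (ε := ε) (N+1)
  obtain ⟨ha, hb⟩ := qq_mul_sub hirr h0 h1 (N+1)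
  have hle := qq_add_le hirr h0 h1 N
  have hq := qq_pos hirr h0 h1 N
  have he := cfe_pos hirr h0 h1 (N+1)
  have he' := cfe_pos hirr h0 h1 (N+2)
  simp only [show N + 1 + 1 = N + 2 from rfl] at *
  have hqz : (1:ℤ) ≤ qq ε (N+1) := by exact_mod_cast hq
  have hqz' : (qq ε (N+1) : ℤ) ≤ qq ε (N+2) := by exact_mod_cast (by omega : qq ε (N+1) ≤ qq ε (N+2))
  generalize qq ε (N+1) = q at *
  generalize qq ε (N+2) = q' at *
  generalize pp ε (N+1) = r at *
  generalize pp ε (N+2) = r' at *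
  generalize cfe ε (N+1) = η at *
  generalize cfe ε (N+2) = η' at *
  obtain ⟨s, hs, hsz⟩ : ∃ s : ℤ, s = (-1)^(N+1) ∧ (s = 1 ∨ s = -1) :=
    ⟨_, rfl, neg_one_pow_eq_or ℤ (N+1)⟩
  have hsr : ((-1:ℝ))^(N+1) = s := by rw [hs]; push_cast; rfl
  have hsr2 : ((-1:ℝ))^(N+2) = -s := by rw [pow_succ, hsr]; ring
  rw [← hs] at hdet
  rw [hsr2] at ha
  rw [hsr] at hb
  have hss : s * s = 1 := by rcases hsz with h | h <;> simp [h]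
  obtain ⟨x, hx⟩ : ∃ x : ℤ, x = s * (k * q' - n * r') := ⟨_, rfl⟩
  obtain ⟨y, hy⟩ : ∃ y : ℤ, y = s * (n * r - k * q) := ⟨_, rfl⟩
  have hnx : n = x * q + y * q' := by
    rw [hx, hy]; linear_combination (-n) * hss - s * n * hdet
  have hkx : k = x * r + y * r' := by
    rw [hx, hy]; linear_combination (-k) * hss - s * k * hdet
  have hval : (n:ℝ) * ε - k = s * (y * η' - x * η) := by
    rw [hnx, hkx]; push_cast; linear_combination x * ha + y * hb
  have habs : |(n:ℝ) * ε - k| = |y * η' - x * η| := by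
    rw [hval]; rcases hsz with h | h <;> simp [h, abs_sub_comm]
  rw [habs, abs_lt] at h
  obtain ⟨hl, hr⟩ := h
  have hx0 : x = 0 := by
    rcases lt_trichotomy x 0 with hxn | hx0 | hxp
    · exfalso
      have hyp : 1 ≤ y := by
        by_contra hy'
        have : y ≤ 0 := by omega
        nlinarith
      have h1 : (x:ℝ) ≤ -1 := by exact_mod_cast (by omega : x ≤ -1)
      have h2 : (1:ℝ) ≤ y := by exact_mod_cast hyp
      nlinarith
    · exact hx0
    · exfalso
      have h1 : (1:ℝ) ≤ x := by exact_mod_cast hxp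
      rcases le_or_gt y 0 with hy0 | hy0
      · have h2 : (y:ℝ) ≤ 0 := by exact_mod_cast hy0
        nlinarith
      · nlinarith
  have hy1 : y = 1 := by
    subst hx0
    have : 1 ≤ y := by
      by_contra hy'
      have : y ≤ 0 := by omega
      nlinarith
    by_contra hne
    have : 2 ≤ y := by omega
    nlinarith
  rw [hnx, hkx, hx0, hy1]
  simp

/-! ### Hitting times of the rotation -/

lemma step_into {c z A η : ℝ} {a : ℕ} (hη : 0 < η) (hA : A < (a + 1) * η) (hz : c ≤ z)
    (hz' : z < c + A) : ∃ k : ℕ, k ≤ a ∧ c ≤ z - k * η ∧ z - k * η < c + η := by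
  have hnn : 0 ≤ (z - c) / η := div_nonneg (by linarith) hη.le
  have h1 := Nat.floor_le hnn
  have h2 := Nat.lt_floor_add_one ((z - c) / η)
  rw [le_div_iff₀ hη] at h1
  rw [div_lt_iff₀ hη] at h2
  refine ⟨⌊(z - c) / η⌋₊, ?_, by linarith, by linarith⟩
  have h3 : (z - c) / η < ((a + 1 : ℕ) : ℝ) := by
    rw [div_lt_iff₀ hη]; push_cast; linarith
  have := (Nat.floor_lt hnn).mpr h3
  omega

/-- Every orbit of the rotation by `-ε` meets every half-open arc of length `η_N` within
`q_N + q_{N+1}` steps. In the inductive step, the arc of length `η_{N+1}` is placed at the end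
of an arc of length `η_N` towards which the rotation by `-q_{N+1} ε` moves, and
`η_N < (a_{N+2} + 1) η_{N+1}`, so `a_{N+2}` further such moves suffice. -/
lemma hit (hirr : Irrational ε) (h0 : 0 < ε) (h1 : ε < 1) (N : ℕ) (y c : ℝ) :
    ∃ n : ℕ, n < qq ε (N+1) + qq ε (N+2) ∧
      ∃ k : ℤ, c ≤ y - n * ε + k ∧ y - n * ε + k < c + cfe ε (N+1) := by
  induction N generalizing y c with
  | zero =>
    have hA : (1:ℝ) < (cfa ε 0 + 1) * ε := by
      have h2 := cfe_rec hirr h0 h1 0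
      have h3 := cfe_succ_lt hirr h0 h1 1
      simp only [zero_add, Nat.reduceAdd, cfe_one] at h2 h3
      have : cfe ε 0 = 1 := rfl
      linarith
    have hf := Int.floor_le (y - c)
    have hf' := Int.lt_floor_add_one (y - c)
    obtain ⟨k, hk, hk1, hk2⟩ := step_into (c := c) (z := y - ⌊y - c⌋) h0 hA (by linarith)
      (by linarith)
    refine ⟨k, ?_, -⌊y - c⌋, ?_, ?_⟩
    · simp [qq]; omega
    · push_cast; linarith
    · push_cast; rw [cfe_one]; linarith
  | succ N ih =>
    have hA : cfe ε (N+1) < (cfa ε (N+1) + 1) * cfe ε (N+2) := by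
      have h2 := cfe_rec hirr h0 h1 (N+1)
      have h3 := cfe_succ_lt hirr h0 h1 (N+2)
      simp only [show N + 1 + 2 = N + 3 from rfl, show N + 1 + 1 = N + 2 from rfl] at h2 h3
      linarith
    have he' := cfe_pos hirr h0 h1 (N+2)
    obtain ⟨-, hb⟩ := qq_mul_sub hirr h0 h1 (N+1)
    simp only [show N + 1 + 2 = N + 3 from rfl, show N + 1 + 1 = N + 2 from rfl] at *
    have hq3 : qq ε (N+3) = cfa ε (N+1) * qq ε (N+2) + qq ε (N+1) := rfl
    have hbound : ∀ n j : ℕ, n < qq ε (N+1) + qq ε (N+2) → j ≤ cfa ε (N+1) →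
        n + j * qq ε (N+2) < qq ε (N+2) + qq ε (N+3) := by
      intro n j hn hj
      have := Nat.mul_le_mul_right (qq ε (N+2)) hj
      omega
    rcases neg_one_pow_eq_or ℝ (N+1) with hs | hs
    · rw [hs] at hb
      obtain ⟨n, hn, k, hk1, hk2⟩ := ih y c
      obtain ⟨j, hj, hj1, hj2⟩ := step_into he' hA hk1 hk2
      refine ⟨n + j * qq ε (N+2), hbound n j hn hj, k + j * pp ε (N+2), ?_, ?_⟩
      · have : y - ((n + j * qq ε (N+2) : ℕ) : ℝ) * ε + ((k + j * pp ε (N+2) : ℤ) : ℝ)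
            = y - n * ε + k - j * cfe ε (N+2) := by
          push_cast; linear_combination (-(j:ℝ)) * hb
        rw [this]; exact hj1
      · have : y - ((n + j * qq ε (N+2) : ℕ) : ℝ) * ε + ((k + j * pp ε (N+2) : ℤ) : ℝ)
            = y - n * ε + k - j * cfe ε (N+2) := by
          push_cast; linear_combination (-(j:ℝ)) * hb
        rw [this]; exact hj2
    · rw [hs] at hb
      -- The rotation by `-q_{N+1} ε` now moves to the right, and the target is the right end of
      -- the arc; `j` is the least number of moves after which the point is at least `c`.
      obtain ⟨n, hn, k, hk1, hk2⟩ := ih y (c + cfe ε (N+2) - cfe ε (N+1))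
      set z := y - n * ε + k with hz
      obtain ⟨j, hj, hj1, hj2⟩ : ∃ j : ℕ, j ≤ cfa ε (N+1) ∧ c ≤ z + j * cfe ε (N+2) ∧
          z + j * cfe ε (N+2) < c + cfe ε (N+2) := by
        rcases le_or_gt c z with hcz | hcz
        · exact ⟨0, by omega, by simpa using hcz, by simp; linarith⟩
        · have hnn : 0 ≤ (c - z) / cfe ε (N+2) := div_nonneg (by linarith) he'.le
          have h2 := Nat.le_ceil ((c - z) / cfe ε (N+2))
          have h3 := Nat.ceil_lt_add_one hnn
          rw [div_le_iff₀ he'] at h2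
          rw [← sub_lt_iff_lt_add, lt_div_iff₀ he'] at h3
          refine ⟨⌈(c - z) / cfe ε (N+2)⌉₊, ?_, by linarith, by linarith⟩
          rw [Nat.ceil_le, div_le_iff₀ he']
          linarith
      have this : y - ((n + j * qq ε (N+2) : ℕ) : ℝ) * ε + ((k + j * pp ε (N+2) : ℤ) : ℝ)
            = z + j * cfe ε (N+2) := by
        push_cast; linear_combination (-(j:ℝ)) * hb
      refine ⟨n + j * qq ε (N+2), hbound n j hn hj, k + j * pp ε (N+2), ?_, ?_⟩
      · rw [this]; exact hj1
      · rw [this]; exact hj2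

end ContinuedFraction

/-! ### Coding of the rotation -/

section Coding

variable {ε x0 : ℝ}

lemma T2_iter (h0 : 0 < ε) (h1 : ε < 1) (hx0 : x0 ∈ Set.Ico (0:ℝ) 1) (n : ℕ) :
    (∃ k : ℤ, (T2 ε)^[n] x0 = x0 - n * ε + k) ∧ 0 ≤ (T2 ε)^[n] x0 ∧ (T2 ε)^[n] x0 < 1 := by
  induction n with
  | zero => exact ⟨⟨0, by simp⟩, hx0.1, hx0.2⟩
  | succ n ih =>
    obtain ⟨⟨k, hk⟩, h2, h3⟩ := ih
    rw [Function.iterate_succ_apply']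
    unfold T2 at *
    split_ifs with h
    · refine ⟨⟨k + 1, ?_⟩, by linarith, by linarith⟩
      rw [hk]; push_cast; ring
    · push Not at h
      refine ⟨⟨k, ?_⟩, by linarith, by linarith⟩
      rw [hk]; push_cast; ring

lemma int_eq_of_unit {x : ℝ} {k l : ℤ} (h1 : 0 ≤ x + k) (h2 : x + k < 1) (h3 : 0 ≤ x + l)
    (h4 : x + l < 1) : k = l := by
  have h5 : (k:ℝ) < l + 1 := by linarith
  have h6 : (l:ℝ) < k + 1 := by linarith
  have h7 : k < l + 1 := by exact_mod_cast h5
  have h8 : l < k + 1 := by exact_mod_cast h6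
  omega

lemma u2_false (h0 : 0 < ε) (h1 : ε < 1) (hx0 : x0 ∈ Set.Ico (0:ℝ) 1) {n : ℕ} {k : ℤ}
    (ha : 0 ≤ x0 - n * ε + k) (hb : x0 - n * ε + k < ε) : u2 ε x0 n = false := by
  obtain ⟨⟨l, hl⟩, h2, h3⟩ := T2_iter h0 h1 hx0 n
  rw [hl] at h2 h3
  have := int_eq_of_unit ha (by linarith) h2 h3
  subst this
  unfold u2
  rw [hl, if_pos hb]

lemma u2_true (h0 : 0 < ε) (h1 : ε < 1) (hx0 : x0 ∈ Set.Ico (0:ℝ) 1) {n : ℕ} {k : ℤ}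
    (ha : ε ≤ x0 - n * ε + k) (hb : x0 - n * ε + k < 1) : u2 ε x0 n = true := by
  obtain ⟨⟨l, hl⟩, h2, h3⟩ := T2_iter h0 h1 hx0 n
  rw [hl] at h2 h3
  have := int_eq_of_unit (by linarith) hb h2 h3
  subst this
  unfold u2
  rw [hl, if_neg (not_lt.mpr ha)]

/-- If the letters at distance `p` differ whenever the orbit is in the arc `[c, c+η)` or will be
in it one step later, then a run of `L ≥ 1` matches avoids the arc for `L + 1` steps. -/
lemma run_le {p L i Q : ℕ} {c η : ℝ}
    (hhit : ∃ n : ℕ, n < Q ∧ ∃ k : ℤ, c ≤ x0 - i * ε - n * ε + k ∧ x0 - i * ε - n * ε + k < c + η)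
    (hQ : 2 ≤ Q)
    (hm : ∀ (j : ℕ) (k : ℤ), (c ≤ x0 - j * ε + k → x0 - j * ε + k < c + η →
      u2 ε x0 j ≠ u2 ε x0 (j + p)))
    (hm' : ∀ (j : ℕ) (k : ℤ), (c + ε ≤ x0 - j * ε + k → x0 - j * ε + k < c + η + ε →
      u2 ε x0 j ≠ u2 ε x0 (j + p)))
    (hper : ∀ j < L, u2 ε x0 (i + j) = u2 ε x0 (i + j + p)) : L + 2 ≤ Q := by
  obtain ⟨n, hn, k, hk1, hk2⟩ := hhit
  rcases Nat.eq_zero_or_pos L with hL | hL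
  · omega
  have hnL : L < n := by
    by_contra hle
    rcases lt_or_eq_of_le (not_lt.mp hle) with h | h
    · refine hm (i + n) k ?_ ?_ (hper n h) <;> push_cast <;> linarith
    · obtain ⟨t, rfl⟩ : ∃ t, n = t + 1 := ⟨n - 1, by omega⟩
      push_cast at hk1 hk2
      refine hm' (i + t) k ?_ ?_ (hper t (by omega)) <;> push_cast <;> linarith
  omega

lemma run_le_weak {p L i Q : ℕ} {c η : ℝ}
    (hhit : ∃ n : ℕ, n < Q ∧ ∃ k : ℤ, c ≤ x0 - i * ε - n * ε + k ∧ x0 - i * ε - n * ε + k < c + η)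
    (hm : ∀ (j : ℕ) (k : ℤ), (c ≤ x0 - j * ε + k → x0 - j * ε + k < c + η →
      u2 ε x0 j ≠ u2 ε x0 (j + p)))
    (hper : ∀ j < L, u2 ε x0 (i + j) = u2 ε x0 (i + j + p)) : L + 1 ≤ Q := by
  obtain ⟨n, hn, k, hk1, hk2⟩ := hhit
  have hnL : L ≤ n := by
    by_contra hle
    refine hm (i + n) k ?_ ?_ (hper n (by omega)) <;> push_cast <;> linarith
  omega

/-- The `N`-th element of the set whose supremum is the index. -/
noncomputable def idxTerm (ε : ℝ) (N : ℕ) : ℝ :=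
  2 + (cfa ε N : ℝ) + ((qq ε N : ℝ) - 2) / (qq ε (N+1) : ℝ)

lemma idxTerm_eq (hirr : Irrational ε) (h0 : 0 < ε) (h1 : ε < 1) (N : ℕ) :
    idxTerm ε N = (2 * qq ε (N+1) + qq ε (N+2) - 2) / qq ε (N+1) := by
  have hq : (0:ℝ) < qq ε (N+1) := by exact_mod_cast qq_pos hirr h0 h1 N
  have : (qq ε (N+2) : ℝ) = cfa ε N * qq ε (N+1) + qq ε N := by
    simp [qq]
  unfold idxTerm
  rw [this]
  field_simp
  ring

/-- Upper bound: a run of `L` matches at distance `p` has exponent `(p + L) / p` at most one of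
the terms of the supremum. With `f` the fractional part of `p ε`, the generic case is `f` or
`1 - f` at most `min ε (1 - ε)`, where `q_N ≤ p < q_{N+1}` gives the term of index `N`; for the
remaining `f` one of the two coding intervals is disjoint from its translate, and the bound on
runs of a single letter suffices. -/
lemma exponent_le (hirr : Irrational ε) (h0 : 0 < ε) (h1 : ε < 1) (hx0 : x0 ∈ Set.Ico (0:ℝ) 1)
    {p L i : ℕ} (hp : 1 ≤ p)
    (hper : ∀ j < L, u2 ε x0 (i + j) = u2 ε x0 (i + j + p)) :
    ∃ N, ((p + L : ℕ) : ℝ) / p ≤ idxTerm ε N := by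
  obtain ⟨N, hN1, hN2⟩ := exists_qq_between hirr h0 h1 p hp
  have hp0 : (0:ℝ) < p := by exact_mod_cast hp
  set K : ℤ := ⌊p * ε⌋ with hK
  obtain ⟨f, hf⟩ : ∃ f : ℝ, f = p * ε - K := ⟨_, rfl⟩
  have hf0 : 0 ≤ f := by have := Int.floor_le (p * ε); linarith
  have hf1 : f < 1 := by have := Int.lt_floor_add_one (p * ε); linarith
  have hq := qq_pos hirr h0 h1 N
  have hq' := qq_pos hirr h0 h1 (N+1)
  simp only [show N + 1 + 1 = N + 2 from rfl] at hq'
  have heps := cfe_anti hirr h0 h1 (show 1 ≤ N + 1 by omega)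
  rw [cfe_one] at heps
  have hepos := cfe_pos hirr h0 h1 (N+1)
  have hfar : ∀ k : ℤ, cfe ε (N+1) ≤ |(p:ℝ) * ε - k| := by
    intro k
    by_contra hlt
    have := (best_approx hirr h0 h1 N p k (by omega) (by omega)
      (by push_cast; exact not_le.mp hlt)).1
    omega
  have hfη : cfe ε (N+1) ≤ f := by
    have := hfar K
    rwa [← hf, abs_of_nonneg hf0] at this
  have hfη' : cfe ε (N+1) ≤ 1 - f := by
    have := hfar (K+1)
    push_cast at this
    rwa [abs_of_nonpos (by linarith), show -((p:ℝ) * ε - (K + 1)) = 1 - f by rw [hf]; ring] at this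
  have hshift : ∀ (j : ℕ) (k l : ℤ), x0 - ((j + p : ℕ) : ℝ) * ε + ((k + K + l : ℤ) : ℝ)
      = x0 - j * ε + k - f + l := by
    intro j k l
    rw [hf]; push_cast; ring
  have hfin : L + 2 ≤ qq ε (N+1) + qq ε (N+2) → ∃ N, ((p + L : ℕ) : ℝ) / p ≤ idxTerm ε N := by
    intro hL
    refine ⟨N, ?_⟩
    rw [idxTerm_eq hirr h0 h1]
    have hqr : (0:ℝ) < qq ε (N+1) := by exact_mod_cast hq
    have hLr : (L:ℝ) + 2 ≤ qq ε (N+1) + qq ε (N+2) := by exact_mod_cast hL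
    have hpr : (qq ε (N+1) : ℝ) ≤ p := by exact_mod_cast hN1
    rw [div_le_div_iff₀ hp0 hqr]
    push_cast
    have hL0 : (0:ℝ) ≤ L := by positivity
    nlinarith
  have hhit := hit hirr h0 h1 N (x0 - i * ε)
  by_cases hA : f ≤ ε ∧ f ≤ 1 - ε
  · apply hfin
    refine run_le (hhit 0) (by omega) ?_ ?_ hper
    · intro j k ha hb
      rw [u2_false h0 h1 hx0 (k := k) (by linarith) (by linarith),
        u2_true h0 h1 hx0 (k := k + K + 1) (by rw [hshift]; push_cast; linarith)
          (by rw [hshift]; push_cast; linarith)]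
      simp
    · intro j k ha hb
      rw [u2_true h0 h1 hx0 (k := k) (by linarith) (by linarith),
        u2_false h0 h1 hx0 (k := k + K + 0) (by rw [hshift]; push_cast; linarith)
          (by rw [hshift]; push_cast; linarith)]
      simp
  by_cases hB : 1 - f ≤ ε ∧ 1 - f ≤ 1 - ε
  · apply hfin
    refine run_le (hhit (-cfe ε (N+1))) (by omega) ?_ ?_ hper
    · intro j k ha hb
      rw [u2_true h0 h1 hx0 (k := k + 1) (by push_cast; linarith) (by push_cast; linarith),
        u2_false h0 h1 hx0 (k := k + K + 1) (by rw [hshift]; push_cast; linarith)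
          (by rw [hshift]; push_cast; linarith)]
      simp
    · intro j k ha hb
      rw [u2_false h0 h1 hx0 (k := k) (by linarith) (by linarith),
        u2_true h0 h1 hx0 (k := k + K + 1) (by rw [hshift]; push_cast; linarith)
          (by rw [hshift]; push_cast; linarith)]
      simp
  have hp2 : f ≠ ε → 2 ≤ p := by
    intro hne
    by_contra hlt
    have hp1 : p = 1 := by omega
    apply hne
    have : K = 0 := by
      rw [hK, hp1, Int.floor_eq_zero_iff]
      exact ⟨by push_cast; linarith, by push_cast; linarith⟩
    rw [hf, this, hp1]; simp
  have hrec := cfe_rec hirr h0 h1 0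
  simp only [zero_add, cfe_one, show cfe ε 0 = 1 from rfl] at hrec
  have hlt2 := cfe_succ_lt hirr h0 h1 1
  simp only [Nat.reduceAdd, cfe_one] at hlt2
  have hpos2 := cfe_pos hirr h0 h1 2
  rcases (by
    by_contra hcon
    push Not at hcon hA hB
    rcases le_or_gt f ε with h | h
    · have := hA h
      have h4 : ¬ f < ε := fun h5 => by linarith [hcon.2 this]
      have h5 : f = ε := by linarith
      linarith [hB (by linarith)]
    · have := hcon.1 h
      linarith [hB (by linarith)] : (ε < f ∧ f < 1 - ε) ∨ (1 - ε < f ∧ f < ε)) with ⟨h2, h3⟩ | ⟨h2, h3⟩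
  · refine ⟨0, ?_⟩
    have hp2' := hp2 h2.ne'
    have ha2 : 2 ≤ cfa ε 0 := by
      by_contra hc
      have : cfa ε 0 = 1 := by have := cfa_pos hirr h0 h1 0; omega
      rw [this] at hrec
      push_cast at hrec
      linarith
    have hL : L + 1 ≤ qq ε 1 + qq ε 2 := by
      refine run_le_weak (hit hirr h0 h1 0 (x0 - i * ε) 0) ?_ hper
      intro j k ha hb
      rw [zero_add, zero_add, cfe_one] at hb
      rw [u2_false h0 h1 hx0 (k := k) (by linarith) (by linarith),
        u2_true h0 h1 hx0 (k := k + K + 1) (by rw [hshift]; push_cast; linarith)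
          (by rw [hshift]; push_cast; linarith)]
      simp
    simp only [qq] at hL
    have hLr : (L:ℝ) ≤ cfa ε 0 := by exact_mod_cast (by omega : L ≤ cfa ε 0)
    have hpr : (2:ℝ) ≤ p := by exact_mod_cast hp2'
    have har : (2:ℝ) ≤ cfa ε 0 := by exact_mod_cast ha2
    rw [div_le_iff₀ hp0]
    simp only [idxTerm, qq]
    push_cast
    nlinarith
  · refine ⟨1, ?_⟩
    have hp2' := hp2 h3.ne
    have ha1 : cfa ε 0 = 1 := by
      by_contra hc
      have : 2 ≤ cfa ε 0 := by have := cfa_pos hirr h0 h1 0; omega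
      have : (2:ℝ) ≤ cfa ε 0 := by exact_mod_cast this
      nlinarith
    have hb1 := cfa_pos hirr h0 h1 1
    rw [ha1] at hrec
    have hL : L + 1 ≤ qq ε 2 + qq ε 3 := by
      refine run_le_weak (hit hirr h0 h1 1 (x0 - i * ε) ε) ?_ hper
      intro j k ha hb
      simp only [Nat.reduceAdd] at hb
      push_cast at hrec
      rw [u2_true h0 h1 hx0 (k := k) (by linarith) (by linarith),
        u2_false h0 h1 hx0 (k := k + K + 0) (by rw [hshift]; push_cast; linarith)
          (by rw [hshift]; push_cast; linarith)]
      simp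
    simp only [qq, ha1] at hL
    have hLr : (L:ℝ) ≤ cfa ε 1 + 1 := by exact_mod_cast (by omega : L ≤ cfa ε 1 + 1)
    have hpr : (2:ℝ) ≤ p := by exact_mod_cast hp2'
    have har : (1:ℝ) ≤ cfa ε 1 := by exact_mod_cast hb1
    rw [div_le_iff₀ hp0]
    simp only [idxTerm, qq, ha1]
    push_cast
    nlinarith

/-- Let `q ε` differ from an integer by `±η`. If the orbit at times `j` and `j + 1` is off the arc
of length `η` adjacent to `0` (on its right for the sign `+`, on its left for the sign `-`), then
the letters at `j` and `j + q` agree. -/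
lemma letter_eq (h0 : 0 < ε) (h1 : ε < 1)
    (hx0 : x0 ∈ Set.Ico (0:ℝ) 1) {q j : ℕ} {r : ℤ} {η c : ℝ} (hη : 0 < η)
    (hc : (q * ε - r = η ∧ c = 0) ∨ (q * ε - r = -η ∧ c = -η))
    (hj : ∀ k : ℤ, ¬ (c ≤ x0 - j * ε + k ∧ x0 - j * ε + k < c + η))
    (hj' : ∀ k : ℤ, ¬ (c ≤ x0 - (j + 1 : ℕ) * ε + k ∧ x0 - (j + 1 : ℕ) * ε + k < c + η)) :
    u2 ε x0 j = u2 ε x0 (j + q) := by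
  obtain ⟨⟨k, hk⟩, hk0, hk1⟩ := T2_iter h0 h1 hx0 j
  rw [hk] at hk0 hk1
  have ha := hj k
  have ha' := hj (k - 1)
  have hb := hj' k
  push_cast at ha ha' hb
  have hsh : x0 - ((j + q : ℕ) : ℝ) * ε + ((k + r : ℤ) : ℝ)
      = x0 - j * ε + k - (q * ε - r) := by push_cast; ring
  rcases hc with ⟨hc, rfl⟩ | ⟨hc, rfl⟩
  · rcases lt_or_ge (x0 - j * ε + k) ε with h | h
    · have : η ≤ x0 - j * ε + k := by
        by_contra hlt
        exact ha ⟨hk0, by linarith⟩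
      rw [u2_false h0 h1 hx0 hk0 h,
        u2_false h0 h1 hx0 (k := k + r) (by rw [hsh]; linarith) (by rw [hsh]; linarith)]
    · have : η + ε ≤ x0 - j * ε + k := by
        by_contra hlt
        exact hb ⟨by linarith, by linarith⟩
      rw [u2_true h0 h1 hx0 h hk1,
        u2_true h0 h1 hx0 (k := k + r) (by rw [hsh]; linarith) (by rw [hsh]; linarith)]
  · rcases lt_or_ge (x0 - j * ε + k) ε with h | h
    · have : x0 - j * ε + k < ε - η := by
        by_contra hlt
        exact hb ⟨by linarith, by linarith⟩
      rw [u2_false h0 h1 hx0 hk0 h,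
        u2_false h0 h1 hx0 (k := k + r) (by rw [hsh]; linarith) (by rw [hsh]; linarith)]
    · have : x0 - j * ε + k < 1 - η := by
        by_contra hlt
        exact ha' ⟨by linarith, by linarith⟩
      rw [u2_true h0 h1 hx0 h hk1,
        u2_true h0 h1 hx0 (k := k + r) (by rw [hsh]; linarith) (by rw [hsh]; linarith)]

/-- Lower bound: there is a run of `q_N + q_{N+1} - 2` matches at distance `q_N`. It starts right
after a visit to the end piece of length `η_{N+1}` of the arc which the rotation by `-q_{N+1} ε`
carries out of the arc, so by `best_approx` the arc is not visited again for
`q_N + q_{N+1} - 1` steps. -/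
lemma exists_run (hirr : Irrational ε) (h0 : 0 < ε) (h1 : ε < 1) (hx0 : x0 ∈ Set.Ico (0:ℝ) 1)
    (N : ℕ) : ∃ i, ∀ j, j + 2 < qq ε (N+1) + qq ε (N+2) →
      u2 ε x0 (i + j) = u2 ε x0 (i + j + qq ε (N+1)) := by
  have hη := cfe_pos hirr h0 h1 (N+1)
  have hη' := cfe_pos hirr h0 h1 (N+2)
  have hlt := cfe_succ_lt hirr h0 h1 (N+1)
  obtain ⟨hq, hq'⟩ := qq_mul_sub hirr h0 h1 (N+1)
  simp only [show N + 1 + 1 = N + 2 from rfl] at *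
  obtain ⟨c, d, hc, hdc, hdc', hd⟩ : ∃ c d : ℝ,
      ((qq ε (N+1) * ε - pp ε (N+1) = cfe ε (N+1) ∧ c = 0) ∨
        (qq ε (N+1) * ε - pp ε (N+1) = -cfe ε (N+1) ∧ c = -cfe ε (N+1))) ∧
      c ≤ d ∧ d + cfe ε (N+2) ≤ c + cfe ε (N+1) ∧
      (∀ z, d ≤ z → z < d + cfe ε (N+2) →
        ¬ (c ≤ z - (qq ε (N+2) * ε - pp ε (N+2)) ∧
          z - (qq ε (N+2) * ε - pp ε (N+2)) < c + cfe ε (N+1))) := by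
    rcases neg_one_pow_eq_or ℝ (N+1) with hs | hs
    · rw [pow_succ, hs] at hq
      rw [hs] at hq'
      refine ⟨-cfe ε (N+1), -cfe ε (N+1), Or.inr ⟨by linarith, rfl⟩, le_rfl, by linarith, ?_⟩
      rintro z h2 h3 ⟨h4, h5⟩
      linarith
    · rw [pow_succ, hs] at hq
      rw [hs] at hq'
      refine ⟨0, cfe ε (N+1) - cfe ε (N+2), Or.inl ⟨by linarith, rfl⟩, by linarith,
        by linarith, ?_⟩
      rintro z h2 h3 ⟨h4, h5⟩
      linarith
  obtain ⟨i, -, k0, hk1, hk2⟩ := hit hirr h0 h1 (N+1) x0 d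
  simp only [show N + 1 + 1 = N + 2 from rfl] at *
  have havoid : ∀ n : ℕ, 1 ≤ n → n < qq ε (N+1) + qq ε (N+2) → ∀ k : ℤ,
      ¬ (c ≤ x0 - (i + n : ℕ) * ε + k ∧ x0 - (i + n : ℕ) * ε + k < c + cfe ε (N+1)) := by
    rintro n hn hn' k ⟨h2, h3⟩
    have hdiff : x0 - (i + n : ℕ) * ε + k
        = (x0 - i * ε + k0) - (n * ε - (k - k0 : ℤ)) := by push_cast; ring
    rw [hdiff] at h2 h3
    obtain ⟨hnq, hkp⟩ := best_approx hirr h0 h1 N n (k - k0) (by omega) (by omega) (by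
      rw [abs_lt]; push_cast at *; constructor <;> linarith)
    apply hd _ hk1 hk2
    rw [hkp] at h2 h3
    have : (n:ℝ) = qq ε (N+2) := by exact_mod_cast hnq
    rw [this] at h2 h3
    push_cast at h2 h3
    exact ⟨h2, h3⟩
  refine ⟨i + 1, fun j hj => ?_⟩
  refine letter_eq h0 h1 hx0 (r := pp ε (N+1)) hη (by exact_mod_cast hc)
    (fun k => ?_) (fun k => ?_)
  · have := havoid (1 + j) (by omega) (by omega) k
    rwa [← add_assoc] at this
  · have := havoid (1 + j + 1) (by omega) (by omega) k
    rwa [← add_assoc, ← add_assoc] at this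

end Coding

/-! ### Fractional powers and matches at a fixed distance -/

lemma period_of_isFactor {α : Type*} [Inhabited α] {u : ℕ → α} {w : List α} {m : ℕ}
    (h : IsFactor (powPrefix w m) u) :
    ∃ i, ∀ j, j + w.length < m → u (i + j) = u (i + j + w.length) := by
  obtain ⟨i, hi⟩ := h
  have hlen : (powPrefix w m).length = m := by simp [powPrefix]
  rw [hlen] at hi
  unfold powPrefix at hi
  have key : ∀ j < m, w.getD (j % w.length) default = u (i + j) := by
    intro j hj
    have := List.map_inj_left.mp hi j (List.mem_range.mpr hj)
    exact this
  refine ⟨i, fun j hj => ?_⟩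
  rw [← key j (by omega), add_assoc, ← key (j + w.length) hj, Nat.add_mod_right]

lemma isFactor_of_period {α : Type*} [Inhabited α] {u : ℕ → α} {p m i : ℕ} (hp : 1 ≤ p)
    (h : ∀ j, j + p < m → u (i + j) = u (i + j + p)) :
    IsFactor (powPrefix ((List.range p).map fun j => u (i + j)) m) u := by
  refine ⟨i, ?_⟩
  have hmod : ∀ j, j < m → u (i + j % p) = u (i + j) := by
    intro j
    induction j using Nat.strong_induction_on with
    | _ j ih =>
      intro hj
      rcases lt_or_ge j p with hlt | hge
      · rw [Nat.mod_eq_of_lt hlt]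
      · obtain ⟨t, rfl⟩ : ∃ t, j = t + p := ⟨j - p, by omega⟩
        rw [Nat.add_mod_right, ih t (by omega) (by omega), h t hj, add_assoc]
  unfold powPrefix
  simp only [List.length_map, List.length_range]
  apply List.map_inj_left.mpr
  intro j hj
  have hjm := List.mem_range.mp hj
  have hlt : j % p < p := Nat.mod_lt _ (by omega)
  rw [List.getD_eq_getElem _ _ (by simpa using hlt)]
  simpa using hmod j hjm

/-- the index of a Sturmian word of slope `ε` equals
`sup { 2 + a_{N+1} + (q_{N-1} - 2)/q_N : N ≥ 0 }` (in `ℝ ∪ {+∞}`). -/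
theorem sturmian_index_formula
    (ε x0 : ℝ) (hirr : Irrational ε) (h0 : 0 < ε) (h1 : ε < 1)
    (hx0 : x0 ∈ Set.Ico (0:ℝ) 1) :
    wordIndex (u2 ε x0) =
      sSup {x : EReal | ∃ N : ℕ,
        x = ((2 + (cfa ε N : ℝ) + ((qq ε N : ℝ) - 2) / (qq ε (N+1) : ℝ) : ℝ) : EReal)} := by
  change wordIndex (u2 ε x0) = sSup {x : EReal | ∃ N : ℕ, x = ((idxTerm ε N : ℝ) : EReal)}
  apply le_antisymm
  · apply sSup_le
    rintro _ ⟨w, hw, -, rfl⟩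
    apply sSup_le
    rintro _ ⟨m, hm, hfac, rfl⟩
    have hp : 1 ≤ w.length := List.length_pos_iff.mpr hw
    obtain ⟨i, hi⟩ := period_of_isFactor hfac
    obtain ⟨L, rfl⟩ : ∃ L, m = w.length + L := ⟨m - w.length, by omega⟩
    obtain ⟨N, hN⟩ := exponent_le (L := L) hirr h0 h1 hx0 hp (fun j hj => hi j (by omega))
    exact le_trans (EReal.coe_le_coe_iff.mpr hN) (le_sSup ⟨N, rfl⟩)
  · apply sSup_le
    rintro _ ⟨N, rfl⟩
    obtain ⟨i, hi⟩ := exists_run hirr h0 h1 hx0 N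
    have hq := qq_pos hirr h0 h1 N
    have hq' := qq_pos hirr h0 h1 (N+1)
    simp only [show N + 1 + 1 = N + 2 from rfl] at hq'
    set q := qq ε (N+1) with hqdef
    obtain ⟨m, hm⟩ : ∃ m, m + 2 = 2 * q + qq ε (N+2) := ⟨2 * q + qq ε (N+2) - 2, by omega⟩
    set w : List Bool := (List.range q).map fun j => u2 ε x0 (i + j) with hw
    have hwl : w.length = q := by simp [hw]
    have hfac : IsFactor (powPrefix w m) (u2 ε x0) :=
      isFactor_of_period hq (fun j hj => hi j (by omega))
    have hval : idxTerm ε N = (m : ℝ) / (w.length : ℝ) := by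
      rw [idxTerm_eq hirr h0 h1, hwl]
      have : (m:ℝ) + 2 = 2 * q + qq ε (N+2) := by exact_mod_cast hm
      rw [← this, add_sub_cancel_right]
    refine le_trans (le_sSup ⟨m, by omega, hfac, by rw [hval]⟩ : _ ≤ factorIndex (u2 ε x0) w)
      (le_sSup ⟨w, ?_, ⟨i, ?_⟩, rfl⟩)
    · intro h
      rw [h] at hwl
      simp at hwl
      omega
    · rw [hwl]
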